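/- arXiv:1502.07487 — 4 statements merged into one kernel-verified Lean document; each statement's English description precedes it below -/
import Mathlib

section
/- Let A, B ∈ ℝ with A² − 4B > 0 and let δ₋ < δ₊ be the two real roots of λ² − Aλ + B = 0. Let r₀ ∈ ℝ, let f : ℝ → ℝ be continuous on [r₀, ∞), and let u : ℝ → ℝ be twice differentiable on [r₀, ∞) with u''(r) + A·u'(r) + B·u(r) = f(r) for all r ≥ r₀. Suppose there exist constants C > 0, δ > δ₋ and κ > δ₊ such that |u(r)| ≤ C·e^{−δr} and |f(r)| ≤ C·e^{−κr} for all r ≥ r₀. Then there exists a constant C' > 0 such that |u(r)| ≤ C'·e^{−δ₊ r} for all r ≥ r₀. -/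
open Real MeasureTheory Set Filter

/-!
Since `δ₋ + δ₊ = A` and `δ₋ δ₊ = B`, the function `v = u' + δ₋ u` solves `v' + δ₊ v = f`. As `f`
decays faster than `e^{-δ₊ r}`, the derivative `e^{δ₊ r} f` of `e^{δ₊ r} v` decays exponentially, so
`v = O(e^{-δ₊ r})`. Now `e^{δ₋ r} u` has derivative `e^{δ₋ r} v = O(e^{-(δ₊ - δ₋) r})` and tends to
`0`, so integrating from `r` to infinity gives `u = O(e^{-δ₊ r})`: no `e^{-δ₋ r}` term survives.
-/

open scoped Topology Asymptotics

lemma isLittleO_exp_of_norm_le_exp {E : Type*} [Norm E] {y : ℝ → E} {p κ C r₀ : ℝ} (hpκ : p < κ)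
    (hy : ∀ r ∈ Ici r₀, ‖y r‖ ≤ C * exp (-κ * r)) :
    y =o[atTop] fun r ↦ exp (-p * r) := by
  have hbigO : y =O[atTop] fun r ↦ exp (-κ * r) := by
    refine .of_bound C ?_
    filter_upwards [Ici_mem_atTop r₀] with r hr
    simpa only [norm_of_nonneg (exp_pos _).le] using hy r hr
  refine hbigO.trans_isLittleO (isLittleO_exp_comp_exp_comp.2 ?_)
  refine (tendsto_id.const_mul_atTop (sub_pos.2 hpκ)).congr fun r ↦ ?_
  simp only [id_eq]
  ring

section FirstOrder

variable {E : Type*} [NormedAddCommGroup E] [NormedSpace ℝ E]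

lemma norm_image_sub_le_of_norm_deriv_le_exp {G g : ℝ → E} {a r s C : ℝ} (ha : a ≠ 0)
    (hrs : r ≤ s) (hG : ∀ x ∈ Icc r s, HasDerivWithinAt G (g x) (Icc r s) x)
    (hg : ∀ x ∈ Ico r s, ‖g x‖ ≤ C * exp (-a * x)) :
    ‖G s - G r‖ ≤ C / a * (exp (-a * r) - exp (-a * s)) := by
  have hbound (x : ℝ) : HasDerivAt (fun x ↦ C / a * (exp (-a * r) - exp (-a * x)))
      (C * exp (-a * x)) x := by
    refine ((((hasDerivAt_id x).const_mul (-a)).exp.const_sub _).const_mul (C / a)).congr_deriv ?_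
    simp only [id_eq]
    field_simp
  refine image_norm_le_of_norm_deriv_right_le_deriv_boundary (f := fun x ↦ G x - G r)
    (fun x hx ↦ ((hG x hx).sub_const (G r)).continuousWithinAt) (fun x hx ↦ ?_) (by simp)
    hbound hg (right_mem_Icc.2 hrs)
  exact ((hG x (Ico_subset_Icc_self hx)).sub_const (G r)).mono_of_mem_nhdsWithin
    (Icc_mem_nhdsGE_of_mem hx)

lemma hasDerivWithinAt_exp_mul_smul {y : ℝ → E} {y' : E} {S : Set ℝ} {r : ℝ} (p : ℝ)
    (hy : HasDerivWithinAt y y' S r) :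
    HasDerivWithinAt (fun x ↦ exp (p * x) • y x) (exp (p * r) • (y' + p • y r)) S r := by
  have hexp : HasDerivAt (fun x ↦ exp (p * x)) (exp (p * r) * p) r := by
    simpa using ((hasDerivAt_id r).const_mul p).exp
  refine (hexp.hasDerivWithinAt.smul hy).congr_deriv ?_
  module

variable {y y' : ℝ → E} {p κ C r₀ : ℝ}

lemma norm_exp_smul_sub_le_of_norm_deriv_add_smul_le (hC : 0 ≤ C) (hpκ : p < κ)
    (hy : ∀ r ∈ Ici r₀, HasDerivWithinAt y (y' r) (Ici r₀) r)
    (hbound : ∀ r ∈ Ici r₀, ‖y' r + p • y r‖ ≤ C * exp (-κ * r))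
    {r s : ℝ} (hr : r ∈ Ici r₀) (hrs : r ≤ s) :
    ‖exp (p * s) • y s - exp (p * r) • y r‖ ≤ C / (κ - p) * exp (-(κ - p) * r) := by
  have hκp : 0 < κ - p := sub_pos.2 hpκ
  have hsub : Icc r s ⊆ Ici r₀ := Icc_subset_Ici_self.trans (Ici_subset_Ici.2 hr)
  refine (norm_image_sub_le_of_norm_deriv_le_exp (C := C) hκp.ne' hrs
    (fun x hx ↦ (hasDerivWithinAt_exp_mul_smul p (hy x (hsub hx))).mono hsub) fun x hx ↦ ?_).trans
    (mul_le_mul_of_nonneg_left (sub_le_self _ (exp_pos _).le) (div_nonneg hC hκp.le))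
  calc ‖exp (p * x) • (y' x + p • y x)‖
      = exp (p * x) * ‖y' x + p • y x‖ := by rw [norm_smul, norm_of_nonneg (exp_pos _).le]
    _ ≤ exp (p * x) * (C * exp (-κ * x)) := by
      gcongr
      exact hbound x (hsub (Ico_subset_Icc_self hx))
    _ = C * exp (-(κ - p) * x) := by
      rw [mul_left_comm, ← exp_add]
      ring_nf

lemma norm_le_exp_of_norm_deriv_add_smul_le (hC : 0 ≤ C) (hpκ : p < κ)
    (hy : ∀ r ∈ Ici r₀, HasDerivWithinAt y (y' r) (Ici r₀) r)
    (hbound : ∀ r ∈ Ici r₀, ‖y' r + p • y r‖ ≤ C * exp (-κ * r)) {r : ℝ} (hr : r ∈ Ici r₀) :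
    ‖y r‖ ≤ (‖exp (p * r₀) • y r₀‖ + C / (κ - p) * exp (-(κ - p) * r₀)) * exp (-p * r) := by
  have hweighted : exp (p * r) * ‖y r‖ ≤
      ‖exp (p * r₀) • y r₀‖ + C / (κ - p) * exp (-(κ - p) * r₀) :=
    calc exp (p * r) * ‖y r‖
        = ‖exp (p * r) • y r‖ := by rw [norm_smul, norm_of_nonneg (exp_pos _).le]
      _ ≤ ‖exp (p * r₀) • y r₀‖ + ‖exp (p * r) • y r - exp (p * r₀) • y r₀‖ :=
        norm_le_norm_add_norm_sub' _ _
      _ ≤ ‖exp (p * r₀) • y r₀‖ + C / (κ - p) * exp (-(κ - p) * r₀) := by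
        gcongr
        exact norm_exp_smul_sub_le_of_norm_deriv_add_smul_le hC hpκ hy hbound self_mem_Ici hr
  rwa [neg_mul p, exp_neg (p * r), ← div_eq_mul_inv, le_div_iff₀' (exp_pos _)]

lemma norm_le_exp_of_isLittleO_of_norm_deriv_add_smul_le (hC : 0 ≤ C) (hpκ : p < κ)
    (hy : ∀ r ∈ Ici r₀, HasDerivWithinAt y (y' r) (Ici r₀) r)
    (hbound : ∀ r ∈ Ici r₀, ‖y' r + p • y r‖ ≤ C * exp (-κ * r))
    (hdecay : y =o[atTop] fun r ↦ exp (-p * r)) {r : ℝ} (hr : r ∈ Ici r₀) :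
    ‖y r‖ ≤ C / (κ - p) * exp (-κ * r) := by
  have hlim : Tendsto (fun s ↦ exp (p * s) • y s) atTop (𝓝 0) := by
    simpa [← exp_neg] using hdecay.tendsto_inv_smul_nhds_zero
  have hweighted : exp (p * r) * ‖y r‖ ≤ C / (κ - p) * exp (-(κ - p) * r) := by
    have hlim_norm := (hlim.sub_const (exp (p * r) • y r)).norm
    rw [zero_sub, norm_neg, norm_smul, norm_of_nonneg (exp_pos _).le] at hlim_norm
    refine le_of_tendsto hlim_norm ?_
    filter_upwards [eventually_ge_atTop r] with s hrs
    exact norm_exp_smul_sub_le_of_norm_deriv_add_smul_le hC hpκ hy hbound hr hrs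
  refine le_of_mul_le_mul_left (hweighted.trans_eq ?_) (exp_pos (p * r))
  rw [mul_left_comm, ← exp_add]
  ring_nf

end FirstOrder

lemma add_eq_and_mul_eq_of_quadratic_roots {K : Type*} [CommRing K] [IsDomain K] {A B p q : K}
    (hp : p ^ 2 - A * p + B = 0) (hq : q ^ 2 - A * q + B = 0) (hpq : p ≠ q) :
    p + q = A ∧ p * q = B := by
  have hsum : p + q = A :=
    mul_left_cancel₀ (sub_ne_zero.2 hpq) (by linear_combination hp - hq)
  exact ⟨hsum, by linear_combination p * hsum - hp⟩

theorem ode_decay_part_one_general {E : Type*} [NormedAddCommGroup E] [NormedSpace ℝ E]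
    {A B δm δp r₀ κ C : ℝ} {u u' u'' f : ℝ → E}
    (hroot_m : δm ^ 2 - A * δm + B = 0) (hroot_p : δp ^ 2 - A * δp + B = 0) (hlt : δm < δp)
    (hu' : ∀ r ∈ Ici r₀, HasDerivWithinAt u (u' r) (Ici r₀) r)
    (hu'' : ∀ r ∈ Ici r₀, HasDerivWithinAt u' (u'' r) (Ici r₀) r)
    (hode : ∀ r ∈ Ici r₀, u'' r + A • u' r + B • u r = f r)
    (hC : 0 < C) (hκ : δp < κ)
    (hu_decay : u =o[atTop] fun r ↦ exp (-δm * r))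
    (hf_decay : ∀ r ∈ Ici r₀, ‖f r‖ ≤ C * exp (-κ * r)) :
    ∃ C' > 0, ∀ r ∈ Ici r₀, ‖u r‖ ≤ C' * exp (-δp * r) := by
  obtain ⟨rfl, rfl⟩ := add_eq_and_mul_eq_of_quadratic_roots hroot_m hroot_p hlt.ne
  have hv' : ∀ r ∈ Ici r₀, HasDerivWithinAt (fun x ↦ u' x + δm • u x) (u'' r + δm • u' r)
      (Ici r₀) r := fun r hr ↦ (hu'' r hr).add ((hu' r hr).const_smul δm)
  have hv_ode : ∀ r ∈ Ici r₀, ‖u'' r + δm • u' r + δp • (u' r + δm • u r)‖ ≤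
      C * exp (-κ * r) := by
    intro r hr
    have hfactor : u'' r + δm • u' r + δp • (u' r + δm • u r) = f r := by
      rw [← hode r hr]
      module
    exact hfactor ▸ hf_decay r hr
  obtain ⟨K, hK, hv⟩ : ∃ K > 0, ∀ r ∈ Ici r₀, ‖u' r + δm • u r‖ ≤ K * exp (-δp * r) := by
    refine ⟨_, ?_, fun r ↦ norm_le_exp_of_norm_deriv_add_smul_le hC.le hκ hv' hv_ode⟩
    exact add_pos_of_nonneg_of_pos (norm_nonneg _)
      (mul_pos (div_pos hC (sub_pos.2 hκ)) (exp_pos _))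
  exact ⟨K / (δp - δm), div_pos hK (sub_pos.2 hlt),
    fun r ↦ norm_le_exp_of_isLittleO_of_norm_deriv_add_smul_le hK.le hlt hu' hv hu_decay⟩

/-- Lemma C.1 (i): a solution of `u'' + A u' + B u = f` which decays faster than the
fast homogeneous rate `e^{-δ₋ r}` and whose source decays faster than `e^{-δ₊ r}`
must itself decay at rate `e^{-δ₊ r}`. -/
theorem ode_decay_part_one
    (A B δm δp r₀ δ κ C : ℝ)
    (u u' u'' f : ℝ → ℝ)
    (hdisc : A ^ 2 - 4 * B > 0)
    (hroot_m : δm ^ 2 - A * δm + B = 0)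
    (hroot_p : δp ^ 2 - A * δp + B = 0)
    (hlt : δm < δp)
    (hf_cont : ContinuousOn f (Ici r₀))
    (hu' : ∀ r ∈ Ici r₀, HasDerivWithinAt u (u' r) (Ici r₀) r)
    (hu'' : ∀ r ∈ Ici r₀, HasDerivWithinAt u' (u'' r) (Ici r₀) r)
    (hode : ∀ r ∈ Ici r₀, u'' r + A * u' r + B * u r = f r)
    (hC : 0 < C) (hδ : δm < δ) (hκ : δp < κ)
    (hu_decay : ∀ r ∈ Ici r₀, |u r| ≤ C * Real.exp (-δ * r))
    (hf_decay : ∀ r ∈ Ici r₀, |f r| ≤ C * Real.exp (-κ * r)) :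
    ∃ C' > 0, ∀ r ∈ Ici r₀, |u r| ≤ C' * Real.exp (-δp * r) := by
  exact ode_decay_part_one_general hroot_m hroot_p hlt hu' hu'' hode hC hκ
    (isLittleO_exp_of_norm_le_exp hδ hu_decay) hf_decay
end

section
/- Let A, B ∈ ℝ with A² − 4B > 0 and let δ₋ < δ₊ be the two real roots of λ² − Aλ + B = 0. Let r₀ ∈ ℝ, let f : ℝ → ℝ be continuous on [r₀, ∞), and let u : ℝ → ℝ be twice differentiable on [r₀, ∞) with u''(r) + A·u'(r) + B·u(r) = f(r) for all r ≥ r₀. Suppose there exist constants C > 0, δ > δ₊ and κ > δ₊ such that |u(r)| ≤ C·e^{−δr} and |f(r)| ≤ C·e^{−κr} for all r ≥ r₀. Then there exists a constant C' > 0 such that |u(r)| ≤ C'·e^{−κ r} for all r ≥ r₀. -/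
open Real MeasureTheory Set Filter

open Asymptotics Topology

/-!
Factor the operator as `(d/dr + δ₊)(d/dr + δ₋)`. With `q = e^{δ₊ r} u` and
`p = e^{δ₊ r} (u' + δ₋ u)` the equation becomes `p' = e^{δ₊ r} f` and `q' = p + (δ₊ - δ₋) q`. The
derivative of `p` decays exponentially, so `p` varies little on `[r, ∞)`; were `p r` larger than
this variation, `q' ≈ p` would force `q` to grow linearly, whereas `q → 0` by the decay of `u`.
Hence `u' + δ₋ u` decays at the rate of `f`, and integrating
`(e^{δ₋ r} u)' = e^{δ₋ r} (u' + δ₋ u)` from infinity transfers this rate to `u`.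
-/

lemma add_eq_and_mul_eq_of_quadratic_roots_s1 {R : Type*} [CommRing R] [NoZeroDivisors R]
    {b c x y : R} (hxy : x ≠ y) (hx : x ^ 2 - b * x + c = 0) (hy : y ^ 2 - b * y + c = 0) :
    x + y = b ∧ x * y = c := by
  have hsum : x + y = b := by
    refine sub_eq_zero.1 ((mul_eq_zero.1 ?_).resolve_left (sub_ne_zero.2 hxy))
    linear_combination hx - hy
  exact ⟨hsum, by linear_combination x * hsum - hx⟩

section ExponentialDecay

variable {E : Type*} [NormedAddCommGroup E] [NormedSpace ℝ E]

lemma norm_exp_smul_le_iff {a κ K r : ℝ} {x : E} :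
    ‖exp (a * r) • x‖ ≤ K * exp (-(κ - a) * r) ↔ ‖x‖ ≤ K * exp (-κ * r) := by
  have hexp : K * exp (-(κ - a) * r) = exp (a * r) * (K * exp (-κ * r)) := by
    rw [mul_left_comm, ← exp_add]
    ring_nf
  rw [norm_smul, norm_of_nonneg (exp_pos _).le, hexp, mul_le_mul_iff_right₀ (exp_pos _)]

lemma tendsto_exp_smul_zero_of_isLittleO {a : ℝ} {l : Filter ℝ} {u : ℝ → E}
    (hu : u =o[l] fun r ↦ exp (-a * r)) :
    Tendsto (fun r ↦ exp (a * r) • u r) l (𝓝 0) := by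
  rw [← isLittleO_one_iff ℝ]
  refine ((isBigO_refl (fun r ↦ exp (a * r)) l).smul_isLittleO hu).congr_right fun r ↦ ?_
  rw [smul_eq_mul, ← exp_add, ← add_mul, add_neg_cancel, zero_mul, exp_zero]

lemma isBigO_exp_neg_mul_of_le {a b : ℝ} (hab : a ≤ b) :
    (fun r ↦ exp (-b * r)) =O[atTop] fun r ↦ exp (-a * r) := by
  refine IsBigO.of_norm_eventuallyLE ?_
  filter_upwards [eventually_ge_atTop 0] with r hr
  rw [norm_of_nonneg (exp_pos _).le]
  gcongr

lemma isLittleO_exp_neg_mul_of_lt {a b : ℝ} (hab : a < b) :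
    (fun r ↦ exp (-b * r)) =o[atTop] fun r ↦ exp (-a * r) := by
  refine isLittleO_exp_comp_exp_comp.2 ?_
  convert tendsto_id.const_mul_atTop (sub_pos.2 hab) using 2 with r
  rw [id]
  ring

lemma hasDerivWithinAt_exp_const_mul (a r : ℝ) (s : Set ℝ) :
    HasDerivWithinAt (fun x ↦ exp (a * x)) (a * exp (a * r)) s r := by
  simpa [mul_comm] using (((hasDerivAt_id r).const_mul a).exp).hasDerivWithinAt (s := s)

lemma hasDerivWithinAt_exp_smul {a r : ℝ} {s : Set ℝ} {v : ℝ → E} {v' : E}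
    (hv : HasDerivWithinAt v v' s r) :
    HasDerivWithinAt (fun x ↦ exp (a * x) • v x) (exp (a * r) • (v' + a • v r)) s r :=
  ((hasDerivWithinAt_exp_const_mul a r s).smul hv).congr_deriv (by module)

lemma norm_sub_le_of_norm_deriv_le_mul_exp {w w' : ℝ → E} {r₀ K μ r s : ℝ} (hμ : 0 < μ)
    (hw : ∀ x ∈ Ici r₀, HasDerivWithinAt w (w' x) (Ici r₀) x)
    (hw' : ∀ x ∈ Ici r₀, ‖w' x‖ ≤ K * exp (-μ * x)) (hr : r₀ ≤ r) (hrs : r ≤ s) :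
    ‖w s - w r‖ ≤ K / μ * exp (-μ * r) := by
  have hK : 0 ≤ K :=
    nonneg_of_mul_nonneg_left ((norm_nonneg _).trans (hw' r hr)) (exp_pos _)
  have hw_right : ∀ x ∈ Icc r s, HasDerivWithinAt (fun x ↦ w x - w r) (w' x) (Ici r) x :=
    fun x hx ↦ ((hw x (hr.trans hx.1)).mono (Ici_subset_Ici.2 hr)).sub_const _
  have hbound := image_norm_le_of_norm_deriv_right_le_deriv_boundary
    (B := fun x ↦ K / μ * (exp (-μ * r) - exp (-μ * x))) (B' := fun x ↦ K * exp (-μ * x))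
    (fun x hx ↦ (hw_right x hx).continuousWithinAt.mono Icc_subset_Ici_self)
    (fun x hx ↦ (hw_right x (Ico_subset_Icc_self hx)).mono (Ici_subset_Ici.2 hx.1))
    (by simp)
    (fun x ↦ by
      have hexp := (hasDerivWithinAt_exp_const_mul (-μ) x univ).hasDerivAt univ_mem
      refine ((hexp.const_sub _).const_mul (K / μ)).congr_deriv ?_
      field_simp)
    (fun x hx ↦ hw' x (hr.trans hx.1)) (right_mem_Icc.2 hrs)
  refine hbound.trans ?_
  gcongr
  exact sub_le_self _ (exp_pos _).le

lemma norm_le_of_eventually_norm_deriv_sub_le {q q' : ℝ → E} {x : E} {R : ℝ}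
    (hq : ∀ᶠ s in atTop, HasDerivAt q (q' s) s)
    (hq_bdd : IsBoundedUnder (· ≤ ·) atTop fun s ↦ ‖q s‖)
    (hq' : ∀ᶠ s in atTop, ‖q' s - x‖ ≤ R) : ‖x‖ ≤ R := by
  obtain ⟨S, hS⟩ := eventually_atTop.1 (hq.and hq')
  by_contra! hR
  have hgrowth : ∀ s ≥ S, (s - S) * (‖x‖ - R) - ‖q S‖ ≤ ‖q s‖ := by
    intro s hs
    have hdev : ‖q s - s • x - (q S - S • x)‖ ≤ R * (s - S) := by
      refine norm_image_sub_le_of_norm_deriv_le_segment' (f := fun t ↦ q t - t • x)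
        (f' := fun t ↦ q' t - x) (fun t ht ↦ ?_) (fun t ht ↦ (hS t ht.1).2) s
        (right_mem_Icc.2 hs)
      exact ((hS t ht.1).1.sub ((hasDerivAt_id t).smul_const x)).hasDerivWithinAt.congr_deriv
        (by simp)
    have hlin : (s - S) * ‖x‖ ≤ R * (s - S) + ‖q s‖ + ‖q S‖ := calc
      (s - S) * ‖x‖ = ‖(s - S) • x‖ := by
        rw [norm_smul, norm_of_nonneg (sub_nonneg.2 hs)]
      _ = ‖q s - q S - (q s - s • x - (q S - S • x))‖ := by congr 1; module
      _ ≤ ‖q s‖ + ‖q S‖ + ‖q s - s • x - (q S - S • x)‖ :=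
        (norm_sub_le _ _).trans (by gcongr; exact norm_sub_le _ _)
      _ ≤ R * (s - S) + ‖q s‖ + ‖q S‖ := by linarith
    linarith
  have hatTop : Tendsto (fun s ↦ (s - S) * (‖x‖ - R) - ‖q S‖) atTop atTop :=
    tendsto_atTop_add_const_right _ _
      ((tendsto_atTop_add_const_right _ _ tendsto_id).atTop_mul_const (sub_pos.2 hR))
  exact not_isBoundedUnder_of_tendsto_atTop
    (tendsto_atTop_mono' _ ((eventually_ge_atTop S).mono hgrowth) hatTop) hq_bdd

lemma norm_le_mul_exp_of_tendsto_zero {w w' : ℝ → E} {r₀ K μ : ℝ} (hμ : 0 < μ)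
    (hw : ∀ r ∈ Ici r₀, HasDerivWithinAt w (w' r) (Ici r₀) r)
    (hw' : ∀ r ∈ Ici r₀, ‖w' r‖ ≤ K * exp (-μ * r))
    (hw_lim : Tendsto w atTop (𝓝 0)) {r : ℝ} (hr : r ∈ Ici r₀) :
    ‖w r‖ ≤ K / μ * exp (-μ * r) := by
  have hlim : Tendsto (fun s ↦ ‖w s - w r‖) atTop (𝓝 ‖w r‖) := by
    simpa using (hw_lim.sub_const (w r)).norm
  refine le_of_tendsto hlim ?_
  filter_upwards [eventually_ge_atTop r] with s hs
  exact norm_sub_le_of_norm_deriv_le_mul_exp hμ hw hw' hr hs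

lemma norm_le_mul_exp_of_tendsto_zero_of_deriv_eq_add_smul {p p' q : ℝ → E} {c r₀ K μ : ℝ}
    (hμ : 0 < μ) (hp : ∀ r ∈ Ici r₀, HasDerivWithinAt p (p' r) (Ici r₀) r)
    (hp' : ∀ r ∈ Ici r₀, ‖p' r‖ ≤ K * exp (-μ * r))
    (hq : ∀ r ∈ Ici r₀, HasDerivWithinAt q (p r + c • q r) (Ici r₀) r)
    (hq_lim : Tendsto q atTop (𝓝 0)) {r : ℝ} (hr : r ∈ Ici r₀) :
    ‖p r‖ ≤ K / μ * exp (-μ * r) := by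
  refine le_of_forall_pos_le_add fun ε hε ↦ ?_
  have hq_deriv : ∀ᶠ s in atTop, HasDerivAt q (p s + c • q s) s :=
    (eventually_gt_atTop r₀).mono fun s hs ↦ (hq s hs.le).hasDerivAt (Ici_mem_nhds hs)
  refine norm_le_of_eventually_norm_deriv_sub_le hq_deriv hq_lim.norm.isBoundedUnder_le ?_
  have hcq : Tendsto (fun s ↦ ‖c • q s‖) atTop (𝓝 0) := by
    simpa using (hq_lim.const_smul c).norm
  filter_upwards [eventually_ge_atTop r, hcq.eventually_le_const hε] with s hrs hs
  calc ‖p s + c • q s - p r‖ = ‖p s - p r + c • q s‖ := by rw [add_sub_right_comm]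
    _ ≤ K / μ * exp (-μ * r) + ε := norm_add_le_of_le
      (norm_sub_le_of_norm_deriv_le_mul_exp hμ hp hp' hr hrs) hs

lemma norm_le_mul_exp_of_norm_deriv_add_smul_le {v v' : ℝ → E} {a κ r₀ K : ℝ} (haκ : a < κ)
    (hv : ∀ r ∈ Ici r₀, HasDerivWithinAt v (v' r) (Ici r₀) r)
    (hbound : ∀ r ∈ Ici r₀, ‖v' r + a • v r‖ ≤ K * exp (-κ * r))
    (hv_decay : v =o[atTop] fun r ↦ exp (-a * r)) {r : ℝ} (hr : r ∈ Ici r₀) :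
    ‖v r‖ ≤ K / (κ - a) * exp (-κ * r) :=
  norm_exp_smul_le_iff.1 <| norm_le_mul_exp_of_tendsto_zero (sub_pos.2 haκ)
    (fun x hx ↦ hasDerivWithinAt_exp_smul (hv x hx))
    (fun x hx ↦ norm_exp_smul_le_iff.2 (hbound x hx))
    (tendsto_exp_smul_zero_of_isLittleO hv_decay) hr

lemma norm_deriv_add_smul_le_mul_exp {u u' u'' f : ℝ → E} {a b κ r₀ K : ℝ} (hbκ : b < κ)
    (hu' : ∀ r ∈ Ici r₀, HasDerivWithinAt u (u' r) (Ici r₀) r)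
    (hu'' : ∀ r ∈ Ici r₀, HasDerivWithinAt u' (u'' r) (Ici r₀) r)
    (hode : ∀ r ∈ Ici r₀, u'' r + (a + b) • u' r + (a * b) • u r = f r)
    (hu_decay : u =o[atTop] fun r ↦ exp (-b * r))
    (hf_decay : ∀ r ∈ Ici r₀, ‖f r‖ ≤ K * exp (-κ * r)) {r : ℝ} (hr : r ∈ Ici r₀) :
    ‖u' r + a • u r‖ ≤ K / (κ - b) * exp (-κ * r) := by
  have hp : ∀ x ∈ Ici r₀, HasDerivWithinAt (fun x ↦ exp (b * x) • (u' x + a • u x))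
      (exp (b * x) • f x) (Ici r₀) x := fun x hx ↦
    (hasDerivWithinAt_exp_smul ((hu'' x hx).add ((hu' x hx).const_smul a))).congr_deriv <| by
      rw [← hode x hx]
      simp only [Pi.add_apply, Pi.smul_apply]
      module
  have hq : ∀ x ∈ Ici r₀, HasDerivWithinAt (fun x ↦ exp (b * x) • u x)
      (exp (b * x) • (u' x + a • u x) + (b - a) • exp (b * x) • u x) (Ici r₀) x := fun x hx ↦
    (hasDerivWithinAt_exp_smul (hu' x hx)).congr_deriv (by module)
  exact norm_exp_smul_le_iff.1 <| norm_le_mul_exp_of_tendsto_zero_of_deriv_eq_add_smul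
    (sub_pos.2 hbκ) hp (fun x hx ↦ norm_exp_smul_le_iff.2 (hf_decay x hx)) hq
    (tendsto_exp_smul_zero_of_isLittleO hu_decay) hr

theorem ode_decay_part_two_general {δm δp r₀ κ C : ℝ} {u u' u'' f : ℝ → E} (hle : δm ≤ δp)
    (hu' : ∀ r ∈ Ici r₀, HasDerivWithinAt u (u' r) (Ici r₀) r)
    (hu'' : ∀ r ∈ Ici r₀, HasDerivWithinAt u' (u'' r) (Ici r₀) r)
    (hode : ∀ r ∈ Ici r₀, u'' r + (δm + δp) • u' r + (δm * δp) • u r = f r)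
    (hκ : δp < κ) (hu_decay : u =o[atTop] fun r ↦ exp (-δp * r))
    (hf_decay : ∀ r ∈ Ici r₀, ‖f r‖ ≤ C * exp (-κ * r)) :
    ∀ r ∈ Ici r₀, ‖u r‖ ≤ C / (κ - δp) / (κ - δm) * exp (-κ * r) := fun _ hr ↦
  norm_le_mul_exp_of_norm_deriv_add_smul_le (hle.trans_lt hκ) hu'
    (fun _ hx ↦ norm_deriv_add_smul_le_mul_exp hκ hu' hu'' hode hu_decay hf_decay hx)
    (hu_decay.trans_isBigO (isBigO_exp_neg_mul_of_le hle)) hr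

end ExponentialDecay

/-- Lemma C.1 (ii): a solution of `u'' + A u' + B u = f` which decays strictly faster
than the slow homogeneous rate `e^{-δ₊ r}` inherits the full decay rate `e^{-κ r}`
of the source term. -/
theorem ode_decay_part_two
    (A B δm δp r₀ δ κ C : ℝ)
    (u u' u'' f : ℝ → ℝ)
    (hdisc : A ^ 2 - 4 * B > 0)
    (hroot_m : δm ^ 2 - A * δm + B = 0)
    (hroot_p : δp ^ 2 - A * δp + B = 0)
    (hlt : δm < δp)
    (hf_cont : ContinuousOn f (Ici r₀))
    (hu' : ∀ r ∈ Ici r₀, HasDerivWithinAt u (u' r) (Ici r₀) r)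
    (hu'' : ∀ r ∈ Ici r₀, HasDerivWithinAt u' (u'' r) (Ici r₀) r)
    (hode : ∀ r ∈ Ici r₀, u'' r + A * u' r + B * u r = f r)
    (hC : 0 < C) (hδ : δp < δ) (hκ : δp < κ)
    (hu_decay : ∀ r ∈ Ici r₀, |u r| ≤ C * Real.exp (-δ * r))
    (hf_decay : ∀ r ∈ Ici r₀, |f r| ≤ C * Real.exp (-κ * r)) :
    ∃ C' > 0, ∀ r ∈ Ici r₀, |u r| ≤ C' * Real.exp (-κ * r) := by
  obtain ⟨rfl, rfl⟩ := add_eq_and_mul_eq_of_quadratic_roots_s1 hlt.ne hroot_m hroot_p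
  have hu_bigO : u =O[atTop] fun r ↦ exp (-δ * r) :=
    .of_bound C <| (eventually_ge_atTop r₀).mono fun r hr ↦ by
      simpa using hu_decay r hr
  exact ⟨C / (κ - δp) / (κ - δm),
    div_pos (div_pos hC (sub_pos.2 hκ)) (sub_pos.2 (hlt.trans hκ)),
    ode_decay_part_two_general hlt.le hu' hu'' hode hκ
      (hu_bigO.trans_isLittleO (isLittleO_exp_neg_mul_of_lt hδ)) hf_decay⟩
end

section
/- Let α > −2, r₀ > 0, C > 0, and let f : ℝ → ℝ be continuous on [r₀, ∞) with |f(r)| ≤ C·e^{−αr} for all r ≥ r₀. Let x : ℝ → ℝ be differentiable on [r₀, ∞) with x'(r) = 2·coth(r)·x(r) + f(r) for all r ≥ r₀, and suppose that e^{−2r}·x(r) → 0 as r → ∞. Then for all r ≥ r₀ one has x(r) = − sinh²(r)·∫_r^∞ f(s)/sinh²(s) ds, and there exists C' > 0 such that |x(r)| ≤ C'·e^{−αr} for all r ≥ r₀. -/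
open Real MeasureTheory Set Filter

/-! If `w' = p w`, the integrating factor `w⁻¹` turns `x' = p x + f` into `(x / w)' = f / w`. When
`x / w` vanishes at infinity, integrating from `a` to `∞` gives `x a = -∫ (w a / w t) f t dt`, and
growth of `w` at rate `β`, that is `w a / w t ≤ e^{-β (t - a)}`, lets `x` inherit any decay rate
`α > -β` of `f`. For `p = 2 coth` one takes `w = sinh²`, which grows at rate `2` with constant
exactly `1`; hence the constant `C / (α + 2)` does not depend on `r₀`. -/

variable {E : Type*} [NormedAddCommGroup E]

section ExponentialDecay

variable {g : ℝ → E} {a γ C : ℝ}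

theorem integrableOn_Ioi_of_norm_le_const_mul_exp (hγ : 0 < γ)
    (hg : AEStronglyMeasurable g (volume.restrict (Ioi a)))
    (hle : ∀ t ∈ Ioi a, ‖g t‖ ≤ C * exp (-γ * t)) : IntegrableOn g (Ioi a) :=
  ((exp_neg_integrableOn_Ioi a hγ).const_mul C).mono' hg
    (ae_restrict_of_forall_mem measurableSet_Ioi hle)

theorem norm_integral_Ioi_le_of_norm_le_const_mul_exp [NormedSpace ℝ E] (hγ : 0 < γ)
    (hle : ∀ t ∈ Ioi a, ‖g t‖ ≤ C * exp (-γ * t)) :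
    ‖∫ t in Ioi a, g t‖ ≤ C * (exp (-γ * a) / γ) :=
  calc ‖∫ t in Ioi a, g t‖
    _ ≤ ∫ t in Ioi a, C * exp (-γ * t) :=
      norm_integral_le_of_norm_le ((exp_neg_integrableOn_Ioi a hγ).const_mul C)
        (ae_restrict_of_forall_mem measurableSet_Ioi hle)
    _ = C * (exp (-γ * a) / γ) := by
      rw [integral_const_mul, integral_exp_mul_Ioi (neg_lt_zero.mpr hγ), neg_div_neg_eq]

end ExponentialDecay

section IntegratingFactor

theorem hasDerivWithinAt_inv_smul_of_linear_ode {𝕜 : Type*} [NontriviallyNormedField 𝕜]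
    [NormedSpace 𝕜 E] {w : 𝕜 → 𝕜} {x : 𝕜 → E} {s : Set 𝕜} {t dw : 𝕜} {v : E} (hw₀ : w t ≠ 0)
    (hw : HasDerivWithinAt w dw s t)
    (hx : HasDerivWithinAt x ((dw / w t) • x t + v) s t) :
    HasDerivWithinAt (fun u ↦ (w u)⁻¹ • x u) ((w t)⁻¹ • v) s t := by
  refine ((hw.fun_inv hw₀).fun_smul hx).congr_deriv ?_
  have hcancel : (w t)⁻¹ * (dw / w t) + -dw / w t ^ 2 = 0 := by field_simp; ring
  rw [smul_add, smul_smul, add_right_comm, ← add_smul, hcancel, zero_smul, zero_add]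

variable [NormedSpace ℝ E] {w w' : ℝ → ℝ} {x f : ℝ → E} {a : ℝ}

theorem hasDerivAt_inv_smul_of_linear_ode_Ici (hw₀ : ∀ t ∈ Ici a, w t ≠ 0)
    (hw : ∀ t ∈ Ici a, HasDerivWithinAt w (w' t) (Ici a) t)
    (hx : ∀ t ∈ Ici a, HasDerivWithinAt x ((w' t / w t) • x t + f t) (Ici a) t) :
    ∀ t ∈ Ioi a, HasDerivAt (fun u ↦ (w u)⁻¹ • x u) ((w t)⁻¹ • f t) t := by
  intro t ht
  have ht' : t ∈ Ici a := Ioi_subset_Ici_self ht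
  exact (hasDerivWithinAt_inv_smul_of_linear_ode (hw₀ t ht') (hw t ht') (hx t ht')).hasDerivAt
    (Ici_mem_nhds ht)

variable [CompleteSpace E]

-- `w⁻¹ • f` is a derivative, and derivatives are measurable.
theorem aestronglyMeasurable_inv_smul_of_linear_ode (hw₀ : ∀ t ∈ Ici a, w t ≠ 0)
    (hw : ∀ t ∈ Ici a, HasDerivWithinAt w (w' t) (Ici a) t)
    (hx : ∀ t ∈ Ici a, HasDerivWithinAt x ((w' t / w t) • x t + f t) (Ici a) t) :
    AEStronglyMeasurable (fun t ↦ (w t)⁻¹ • f t) (volume.restrict (Ioi a)) :=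
  (aestronglyMeasurable_deriv _ _).congr <| ae_restrict_of_forall_mem measurableSet_Ioi
    fun t ht ↦ (hasDerivAt_inv_smul_of_linear_ode_Ici hw₀ hw hx t ht).deriv

theorem eq_neg_smul_integral_Ioi_of_linear_ode (hw₀ : ∀ t ∈ Ici a, w t ≠ 0)
    (hw : ∀ t ∈ Ici a, HasDerivWithinAt w (w' t) (Ici a) t)
    (hx : ∀ t ∈ Ici a, HasDerivWithinAt x ((w' t / w t) • x t + f t) (Ici a) t)
    (hint : IntegrableOn (fun t ↦ (w t)⁻¹ • f t) (Ioi a))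
    (hlim : Tendsto (fun t ↦ (w t)⁻¹ • x t) atTop (nhds 0)) :
    x a = -w a • ∫ t in Ioi a, (w t)⁻¹ • f t := by
  have ha : a ∈ Ici a := self_mem_Ici
  have hcont : ContinuousWithinAt (fun t ↦ (w t)⁻¹ • x t) (Ici a) a :=
    (hasDerivWithinAt_inv_smul_of_linear_ode (hw₀ a ha) (hw a ha) (hx a ha)).continuousWithinAt
  rw [integral_Ioi_of_hasDerivAt_of_tendsto hcont
    (hasDerivAt_inv_smul_of_linear_ode_Ici hw₀ hw hx) hint hlim, zero_sub, neg_smul_neg,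
    smul_inv_smul₀ (hw₀ a ha)]

end IntegratingFactor

variable [NormedSpace ℝ E]

section ExponentialGrowth

variable {w : ℝ → ℝ} {x f : ℝ → E} {a α β C : ℝ}

theorem norm_inv_smul_le_of_exp_mul_le {p q t : ℝ} (v : E) (hp : 0 < p)
    (hpq : exp (β * (t - a)) * p ≤ q) :
    ‖q⁻¹ • v‖ ≤ exp (β * a) / p * ‖exp (-β * t) • v‖ := by
  have hinv : q⁻¹ ≤ exp (β * a) / p * exp (-β * t) :=
    calc q⁻¹
      _ ≤ (exp (β * (t - a)) * p)⁻¹ := inv_anti₀ (by positivity) hpq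
      _ = exp (β * a) / p * exp (-β * t) := by
        rw [mul_inv, ← exp_neg, div_mul_eq_mul_div, ← exp_add, div_eq_mul_inv]
        ring_nf
  have hq : 0 < q := lt_of_lt_of_le (by positivity) hpq
  rw [norm_smul, norm_smul, norm_of_nonneg (inv_nonneg.mpr hq.le), norm_of_nonneg (exp_nonneg _),
    ← mul_assoc]
  gcongr

theorem tendsto_inv_smul_zero_of_exp_growth (hwa : 0 < w a)
    (hgrowth : ∀ t ∈ Ici a, exp (β * (t - a)) * w a ≤ w t)
    (hlim : Tendsto (fun t ↦ exp (-β * t) • x t) atTop (nhds 0)) :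
    Tendsto (fun t ↦ (w t)⁻¹ • x t) atTop (nhds 0) := by
  refine squeeze_zero_norm' (a := fun t ↦ exp (β * a) / w a * ‖exp (-β * t) • x t‖) ?_ ?_
  · filter_upwards [eventually_ge_atTop a] with t ht
    exact norm_inv_smul_le_of_exp_mul_le (x t) hwa (hgrowth t ht)
  · simpa only [norm_zero, mul_zero] using hlim.norm.const_mul (exp (β * a) / w a)

theorem norm_inv_smul_le_of_exp_growth_of_exp_decay (hwa : 0 < w a)
    (hgrowth : ∀ t ∈ Ici a, exp (β * (t - a)) * w a ≤ w t)
    (hf : ∀ t ∈ Ici a, ‖f t‖ ≤ C * exp (-α * t)) :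
    ∀ t ∈ Ioi a, ‖(w t)⁻¹ • f t‖ ≤ exp (β * a) / w a * C * exp (-(α + β) * t) := by
  intro t ht
  have ht' : t ∈ Ici a := Ioi_subset_Ici_self ht
  calc ‖(w t)⁻¹ • f t‖
    _ ≤ exp (β * a) / w a * ‖exp (-β * t) • f t‖ :=
      norm_inv_smul_le_of_exp_mul_le (f t) hwa (hgrowth t ht')
    _ ≤ exp (β * a) / w a * (exp (-β * t) * (C * exp (-α * t))) := by
      rw [norm_smul, norm_of_nonneg (exp_nonneg _)]
      gcongr
      exact hf t ht'
    _ = exp (β * a) / w a * C * exp (-(α + β) * t) := by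
      rw [show -(α + β) * t = -β * t + -α * t by ring, exp_add]
      ring

theorem norm_smul_integral_Ioi_inv_smul_le (hαβ : 0 < α + β) (hwa : 0 < w a)
    (hgrowth : ∀ t ∈ Ici a, exp (β * (t - a)) * w a ≤ w t)
    (hf : ∀ t ∈ Ici a, ‖f t‖ ≤ C * exp (-α * t)) :
    ‖w a • ∫ t in Ioi a, (w t)⁻¹ • f t‖ ≤ C / (α + β) * exp (-α * a) := by
  rw [norm_smul, norm_of_nonneg hwa.le]
  calc w a * ‖∫ t in Ioi a, (w t)⁻¹ • f t‖
    _ ≤ w a * (exp (β * a) / w a * C * (exp (-(α + β) * a) / (α + β))) := by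
      gcongr
      exact norm_integral_Ioi_le_of_norm_le_const_mul_exp hαβ
        (norm_inv_smul_le_of_exp_growth_of_exp_decay hwa hgrowth hf)
    _ = C / (α + β) * exp (-α * a) := by
      rw [show -α * a = β * a + -(α + β) * a by ring, exp_add]
      field_simp

theorem integral_representation_and_decay_of_linear_ode [CompleteSpace E] {w' : ℝ → ℝ}
    (hαβ : 0 < α + β) (hwa : 0 < w a)
    (hw : ∀ t ∈ Ici a, HasDerivWithinAt w (w' t) (Ici a) t)
    (hgrowth : ∀ t ∈ Ici a, exp (β * (t - a)) * w a ≤ w t)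
    (hf : ∀ t ∈ Ici a, ‖f t‖ ≤ C * exp (-α * t))
    (hx : ∀ t ∈ Ici a, HasDerivWithinAt x ((w' t / w t) • x t + f t) (Ici a) t)
    (hlim : Tendsto (fun t ↦ exp (-β * t) • x t) atTop (nhds 0)) :
    (IntegrableOn (fun t ↦ (w t)⁻¹ • f t) (Ici a) ∧
      x a = -w a • ∫ t in Ici a, (w t)⁻¹ • f t) ∧
    ‖x a‖ ≤ C / (α + β) * exp (-α * a) := by
  have hw₀ : ∀ t ∈ Ici a, w t ≠ 0 := fun t ht ↦
    ((mul_pos (exp_pos _) hwa).trans_le (hgrowth t ht)).ne'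
  have hint : IntegrableOn (fun t ↦ (w t)⁻¹ • f t) (Ioi a) :=
    integrableOn_Ioi_of_norm_le_const_mul_exp hαβ
      (aestronglyMeasurable_inv_smul_of_linear_ode hw₀ hw hx)
      (norm_inv_smul_le_of_exp_growth_of_exp_decay hwa hgrowth hf)
  have hrep : x a = -w a • ∫ t in Ioi a, (w t)⁻¹ • f t :=
    eq_neg_smul_integral_Ioi_of_linear_ode hw₀ hw hx hint
      (tendsto_inv_smul_zero_of_exp_growth hwa hgrowth hlim)
  refine ⟨⟨(integrableOn_Ici_iff_integrableOn_Ioi).mpr hint, ?_⟩, ?_⟩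
  · rwa [integral_Ici_eq_integral_Ioi]
  · rw [hrep, neg_smul, norm_neg]
    exact norm_smul_integral_Ioi_inv_smul_le hαβ hwa hgrowth hf

end ExponentialGrowth

section SinhSq

theorem exp_sub_mul_sinh_le_sinh {a t : ℝ} (hat : a ≤ t) : exp (t - a) * sinh a ≤ sinh t := by
  have hexp : exp (t - a) * exp a = exp t := by rw [← exp_add, sub_add_cancel]
  have hexp_neg : exp (-t) ≤ exp (t - a) * exp (-a) := by
    rw [← exp_add]
    exact exp_le_exp.mpr (by linarith)
  rw [sinh_eq, sinh_eq]
  linarith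

theorem exp_two_mul_sub_mul_sinh_sq_le_sinh_sq {a t : ℝ} (ha : 0 ≤ a) (hat : a ≤ t) :
    exp (2 * (t - a)) * sinh a ^ 2 ≤ sinh t ^ 2 :=
  calc exp (2 * (t - a)) * sinh a ^ 2
    _ = (exp (t - a) * sinh a) ^ 2 := by rw [mul_pow, ← exp_nat_mul, Nat.cast_ofNat]
    _ ≤ sinh t ^ 2 :=
      pow_le_pow_left₀ (mul_nonneg (exp_nonneg _) (sinh_nonneg_iff.mpr ha))
        (exp_sub_mul_sinh_le_sinh hat) 2

theorem hasDerivAt_sinh_sq (t : ℝ) :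
    HasDerivAt (fun u ↦ sinh u ^ 2) (2 * sinh t * cosh t) t := by
  simpa using (hasDerivAt_sinh t).fun_pow 2

theorem two_mul_cosh_div_sinh (t : ℝ) :
    2 * (cosh t / sinh t) = 2 * sinh t * cosh t / sinh t ^ 2 := by
  field_simp

end SinhSq

theorem first_order_ode_tangential_decay_general [CompleteSpace E]
    {α r₀ C : ℝ} {f x : ℝ → E} (hα : -2 < α) (hr₀ : 0 < r₀)
    (hf_decay : ∀ r ∈ Ici r₀, ‖f r‖ ≤ C * exp (-α * r))
    (hx : ∀ r ∈ Ici r₀,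
      HasDerivWithinAt x ((2 * (cosh r / sinh r)) • x r + f r) (Ici r₀) r)
    (hlim : Tendsto (fun r ↦ exp (-2 * r) • x r) atTop (nhds 0)) :
    (∀ r ∈ Ici r₀,
      IntegrableOn (fun s ↦ (sinh s ^ 2)⁻¹ • f s) (Ici r) ∧
      x r = -sinh r ^ 2 • ∫ s in Ici r, (sinh s ^ 2)⁻¹ • f s) ∧
    ∀ r ∈ Ici r₀, ‖x r‖ ≤ C / (α + 2) * exp (-α * r) := by
  rw [← forall₂_and]
  intro r hr
  have hsub : Ici r ⊆ Ici r₀ := Ici_subset_Ici.mpr hr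
  have hr_pos : 0 < r := hr₀.trans_le hr
  have hode : ∀ t ∈ Ici r, HasDerivWithinAt x
      ((2 * sinh t * cosh t / sinh t ^ 2) • x t + f t) (Ici r) t := fun t ht ↦
    two_mul_cosh_div_sinh t ▸ (hx t (hsub ht)).mono hsub
  exact integral_representation_and_decay_of_linear_ode (w := fun t ↦ sinh t ^ 2)
    (by linarith) (pow_pos (sinh_pos_iff.mpr hr_pos) 2)
    (fun t _ ↦ (hasDerivAt_sinh_sq t).hasDerivWithinAt)
    (fun t ht ↦ exp_two_mul_sub_mul_sinh_sq_le_sinh_sq hr_pos.le ht)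
    (fun t ht ↦ hf_decay t (hsub ht)) hode hlim

/-- Representation formula and decay estimate for the first-order ODE
`x' = 2 coth(r) x + f` with exponentially decaying source, assuming the sub-critical
growth condition `e^{-2r} x(r) → 0`. -/
theorem first_order_ode_tangential_decay
    (α r₀ C : ℝ) (f x : ℝ → ℝ)
    (hα : -2 < α) (hr₀ : 0 < r₀) (hC : 0 < C)
    (hf_cont : ContinuousOn f (Ici r₀))
    (hf_decay : ∀ r ∈ Ici r₀, |f r| ≤ C * Real.exp (-α * r))
    (hx : ∀ r ∈ Ici r₀,
      HasDerivWithinAt x (2 * (Real.cosh r / Real.sinh r) * x r + f r) (Ici r₀) r)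
    (hlim : Tendsto (fun r => Real.exp (-2 * r) * x r) atTop (nhds 0)) :
    (∀ r ∈ Ici r₀,
      IntegrableOn (fun s => f s / (Real.sinh s) ^ 2) (Ici r) ∧
      x r = -(Real.sinh r) ^ 2 * ∫ s in Ici r, f s / (Real.sinh s) ^ 2) ∧
    ∃ C' > 0, ∀ r ∈ Ici r₀, |x r| ≤ C' * Real.exp (-α * r) := by
  obtain ⟨hrep, hbound⟩ := first_order_ode_tangential_decay_general hα hr₀ hf_decay hx hlim
  simp only [div_eq_inv_mul]
  exact ⟨hrep, C / (α + 2), div_pos hC (by linarith), hbound⟩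
end

section
/- Let (X, μ) be a measure space, let ρ : X → ℝ be measurable, let h, k : X → [0, ∞] be measurable, and let a ∈ ℝ, c ≥ 0, C ≥ 0, t₀ ∈ ℝ. Suppose that ∫_{\{a−1 ≤ ρ < a\}} k dμ < ∞ and that for every t ≥ t₀ one has (t³ − c)·∫_{\{ρ ≥ a\}} e^{2tρ(x)} h(x) dμ(x) ≤ C·∫_{\{a−1 ≤ ρ < a\}} e^{2tρ(x)} k(x) dμ(x). Then h = 0 μ-almost everywhere on the set {ρ ≥ a}. -/
open Real MeasureTheory Set Filter ENNReal

/-!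
For `t ≥ 0` the weight `e^{2tρ}` is at least `e^{2ta}` where `a ≤ ρ` and at most `e^{2ta}` where
`ρ ≤ a`. This common factor cancels from the Carleman inequality, leaving
`(t³ - c) ∫ h ≤ C ∫ k` with a finite right-hand side independent of `t`. Letting `t → ∞` forces
`∫ h = 0`.
-/

open scoped Topology

section Weights

variable {X Y : Type*} [MeasurableSpace X] [MeasurableSpace Y] {μ : Measure X} {ν : Measure Y}

lemma const_mul_lintegral_le_lintegral_mul {w f : X → ℝ≥0∞} {E : ℝ≥0∞} (hw : ∀ᵐ x ∂μ, E ≤ w x) :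
    E * ∫⁻ x, f x ∂μ ≤ ∫⁻ x, w x * f x ∂μ :=
  (lintegral_const_mul_le E f).trans <| lintegral_mono_ae <| hw.mono fun _ hx ↦ by gcongr

lemma lintegral_mul_le_const_mul_lintegral {w f : X → ℝ≥0∞} {E : ℝ≥0∞} (hE : E ≠ ∞)
    (hw : ∀ᵐ x ∂μ, w x ≤ E) :
    ∫⁻ x, w x * f x ∂μ ≤ E * ∫⁻ x, f x ∂μ :=
  (lintegral_mono_ae <| hw.mono fun _ hx ↦ by gcongr).trans_eq (lintegral_const_mul' E f hE)

lemma mul_lintegral_le_of_mul_lintegral_weight_le {v h : X → ℝ≥0∞} {w k : Y → ℝ≥0∞}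
    {A C E : ℝ≥0∞} (hE₀ : E ≠ 0) (hE : E ≠ ∞) (hv : ∀ᵐ x ∂μ, E ≤ v x) (hw : ∀ᵐ y ∂ν, w y ≤ E)
    (hle : A * ∫⁻ x, v x * h x ∂μ ≤ C * ∫⁻ y, w y * k y ∂ν) :
    A * ∫⁻ x, h x ∂μ ≤ C * ∫⁻ y, k y ∂ν := by
  rw [← ENNReal.mul_le_mul_iff_right hE₀ hE]
  calc E * (A * ∫⁻ x, h x ∂μ)
      = A * (E * ∫⁻ x, h x ∂μ) := mul_left_comm ..
    _ ≤ A * ∫⁻ x, v x * h x ∂μ := by gcongr; exact const_mul_lintegral_le_lintegral_mul hv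
    _ ≤ C * ∫⁻ y, w y * k y ∂ν := hle
    _ ≤ C * (E * ∫⁻ y, k y ∂ν) := by gcongr; exact lintegral_mul_le_const_mul_lintegral hE hw
    _ = E * (C * ∫⁻ y, k y ∂ν) := mul_left_comm ..

end Weights

lemma eq_zero_of_tendsto_top_of_frequently_mul_le {ι : Type*} {l : Filter ι} {A : ι → ℝ≥0∞}
    {x M : ℝ≥0∞} (hA : Tendsto A l (𝓝 ∞)) (hM : M ≠ ∞) (hle : ∃ᶠ i in l, A i * x ≤ M) : x = 0 := by
  by_contra hx
  have hAx : Tendsto (fun i ↦ A i * x) l (𝓝 ∞) := by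
    simpa only [ENNReal.top_mul hx] using
      ENNReal.Tendsto.mul_const (b := x) hA (.inl ENNReal.top_ne_zero)
  exact hM (top_le_iff.1 (le_of_tendsto_of_frequently hAx hle))

theorem carleman_forces_vanishing_general {X Y : Type*} [MeasurableSpace X] [MeasurableSpace Y]
    {μ : Measure X} {ν : Measure Y} {ρ : X → ℝ} {σ : Y → ℝ} {h : X → ℝ≥0∞} {k : Y → ℝ≥0∞}
    {A : ℝ → ℝ≥0∞} {C : ℝ≥0∞} {a : ℝ} (hh : AEMeasurable h μ)
    (hρ : ∀ᵐ x ∂μ, a ≤ ρ x) (hσ : ∀ᵐ y ∂ν, σ y ≤ a)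
    (hA : Tendsto A atTop (𝓝 ∞)) (hC : C ≠ ∞) (hk : ∫⁻ y, k y ∂ν ≠ ∞)
    (hcarleman : ∃ᶠ t in atTop,
      A t * ∫⁻ x, ENNReal.ofReal (Real.exp (2 * t * ρ x)) * h x ∂μ
        ≤ C * ∫⁻ y, ENNReal.ofReal (Real.exp (2 * t * σ y)) * k y ∂ν) :
    ∀ᵐ x ∂μ, h x = 0 := by
  have hunweighted : ∃ᶠ t in atTop, A t * ∫⁻ x, h x ∂μ ≤ C * ∫⁻ y, k y ∂ν := by
    refine (hcarleman.and_eventually (eventually_ge_atTop 0)).mono fun t ⟨hle, ht⟩ ↦ ?_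
    have hE₀ : ENNReal.ofReal (Real.exp (2 * t * a)) ≠ 0 :=
      (ENNReal.ofReal_pos.2 (Real.exp_pos _)).ne'
    exact mul_lintegral_le_of_mul_lintegral_weight_le hE₀ ENNReal.ofReal_ne_top
      (hρ.mono fun _ hx ↦ by gcongr) (hσ.mono fun _ hy ↦ by gcongr) hle
  have hzero : ∫⁻ x, h x ∂μ = 0 :=
    eq_zero_of_tendsto_top_of_frequently_mul_le hA (ENNReal.mul_ne_top hC hk) hunweighted
  exact (lintegral_eq_zero_iff' hh).1 hzero

/-- Abstract mechanism of the unique continuation argument: if a Carleman-type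
inequality `(t³ - c) ∫_{ρ ≥ a} e^{2tρ} h ≤ C ∫_{a-1 ≤ ρ < a} e^{2tρ} k` holds for all
large `t`, then `h` vanishes almost everywhere on `{ρ ≥ a}`. -/
theorem carleman_forces_vanishing
    {X : Type*} [MeasurableSpace X] (μ : Measure X)
    (ρ : X → ℝ) (h k : X → ℝ≥0∞) (a c C t₀ : ℝ)
    (hρ : Measurable ρ) (hh : Measurable h) (hk : Measurable k)
    (hc : 0 ≤ c) (hC : 0 ≤ C)
    (hfin : ∫⁻ x in {x | a - 1 ≤ ρ x ∧ ρ x < a}, k x ∂μ < ⊤)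
    (hineq : ∀ t ≥ t₀,
      ENNReal.ofReal (t ^ 3 - c) *
          ∫⁻ x in {x | a ≤ ρ x}, ENNReal.ofReal (Real.exp (2 * t * ρ x)) * h x ∂μ
        ≤ ENNReal.ofReal C *
          ∫⁻ x in {x | a - 1 ≤ ρ x ∧ ρ x < a},
            ENNReal.ofReal (Real.exp (2 * t * ρ x)) * k x ∂μ) :
    ∀ᵐ x ∂(μ.restrict {x | a ≤ ρ x}), h x = 0 := by
  have hS : MeasurableSet {x | a ≤ ρ x} := measurableSet_le measurable_const hρ
  have hT : MeasurableSet {x | a - 1 ≤ ρ x ∧ ρ x < a} := hρ measurableSet_Ico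
  have hgrowth : Tendsto (fun t : ℝ ↦ ENNReal.ofReal (t ^ 3 - c)) atTop (𝓝 ∞) :=
    ENNReal.tendsto_ofReal_atTop.comp
      (tendsto_atTop_add_const_right _ (-c) (tendsto_pow_atTop three_ne_zero))
  exact carleman_forces_vanishing_general hh.aemeasurable (ae_restrict_of_forall_mem hS fun _ ↦ id)
    (ae_restrict_of_forall_mem hT fun _ hx ↦ hx.2.le) hgrowth ENNReal.ofReal_ne_top hfin.ne
    ((eventually_ge_atTop t₀).mono hineq).frequently
end
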